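/- Let I be an ideal on ℕ, let X be a regular topological space, let 𝓕 be a rough family on X all of whose members are closed sets, and let x : ℕ → X be a sequence such that {n : x n ∉ K} ∈ I for some compact set K ⊆ X. Then Γ_x(I,𝓕) = {η ∈ X : F_η ∩ Γ_x(I) ≠ ∅}. -/

import Mathlib

open Set Filter Topology Metric

def IsIdeal (I : Set (Set ℕ)) : Prop :=
  (∀ A B : Set ℕ, A ⊆ B → B ∈ I → A ∈ I) ∧
  (∀ A B : Set ℕ, A ∈ I → B ∈ I → A ∪ B ∈ I) ∧
  (∀ A : Set ℕ, A.Finite → A ∈ I) ∧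
  (Set.univ : Set ℕ) ∉ I

def IsRoughFamily {X : Type*} (F : X → Set X) : Prop :=
  ∀ η : X, η ∈ F η

def RoughLim {X : Type*} [TopologicalSpace X] (I : Set (Set ℕ)) (F : X → Set X)
    (x : ℕ → X) : Set X :=
  {η : X | ∀ U : Set X, IsOpen U → F η ⊆ U → {n : ℕ | x n ∉ U} ∈ I}

def RoughLimStar {X : Type*} [TopologicalSpace X] (I : Set (Set ℕ)) (F : X → Set X)
    (x : ℕ → X) : Set X :=
  {η : X | ∃ S ∈ I, ∀ U : Set X, IsOpen U → F η ⊆ U → {n : ℕ | n ∉ S ∧ x n ∉ U}.Finite}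

def RoughCluster {X : Type*} [TopologicalSpace X] (I : Set (Set ℕ)) (F : X → Set X)
    (x : ℕ → X) : Set X :=
  {η : X | ∀ U : Set X, IsOpen U → F η ⊆ U → {n : ℕ | x n ∈ U} ∉ I}

def RoughLimitPts {X : Type*} [TopologicalSpace X] (I : Set (Set ℕ)) (F : X → Set X)
    (x : ℕ → X) : Set X :=
  {η : X | ∃ S : Set ℕ, S ∉ I ∧ ∀ U : Set X, IsOpen U → F η ⊆ U → {n ∈ S | x n ∉ U}.Finite}

def IClusterPts {X : Type*} [TopologicalSpace X] (I : Set (Set ℕ)) (x : ℕ → X) : Set X :=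
  RoughCluster I (fun η => {η}) x

def ILimitPts {X : Type*} [TopologicalSpace X] (I : Set (Set ℕ)) (x : ℕ → X) : Set X :=
  RoughLimitPts I (fun η => {η}) x

def IsPIdeal (I : Set (Set ℕ)) : Prop :=
  ∀ S : ℕ → Set ℕ, Monotone S → (∀ j, S j ∈ I) → ∃ T ∈ I, ∀ j, (S j \ T).Finite

def IsPPlusIdeal (I : Set (Set ℕ)) : Prop :=
  ∀ A : ℕ → Set ℕ, Antitone A → (∀ k, A k ∉ I) → ∃ B : Set ℕ, B ∉ I ∧ ∀ k, (B \ A k).Finite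

def HasUCProperty (X : Type*) [MetricSpace X] : Prop :=
  ∀ F G : Set X, IsClosed F → IsClosed G → F.Nonempty → G.Nonempty → Disjoint F G →
    ∃ ε : ℝ, 0 < ε ∧ ∀ x ∈ F, ∀ y ∈ G, ε < dist x y

def UpperVietorisContinuous {X : Type*} [TopologicalSpace X] (F : X → Set X) : Prop :=
  ∀ η : X, ∀ U : Set X, IsOpen U → F η ⊆ U →
    ∃ V : Set X, IsOpen V ∧ η ∈ V ∧ ∀ lam ∈ V, F lam ⊆ U

/-!
Passing to the dual filter of `I` and pushing it forward along `x` gives a filter `l` on `X`: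
`η` is a rough cluster point iff `𝓝ˢ (F η)` meets `l`, and a classical one iff `𝓝 η` does.
In an `R1Space`, `closure K` is again compact. If no point of the closed set `F η` is a
cluster point of `l`, then `𝓝ˢ (F η ∩ closure K)` is disjoint from `l` by compactness, while the
rest of `F η` lies in the open set `(closure K)ᶜ`, whose complement belongs to `l`; hence
`𝓝ˢ (F η)` is disjoint from `l`.
-/

section NhdsSetCluster

variable {X : Type*} [TopologicalSpace X] {S K : Set X} {l : Filter X}

theorem neBot_nhdsSet_inf_iff_forall_isOpen_frequently :
    (𝓝ˢ S ⊓ l).NeBot ↔ ∀ U : Set X, IsOpen U → S ⊆ U → ∃ᶠ y in l, y ∈ U := by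
  rw [inf_neBot_iff_frequently_left]
  refine ⟨fun h U hU hSU ↦ h (hU.mem_nhdsSet.2 hSU), fun h p hp ↦ ?_⟩
  obtain ⟨U, hU, hSU, hUp⟩ := mem_nhdsSet_iff_exists.1 hp
  exact (h U hU hSU).mono hUp

theorem neBot_nhdsSet_inf_iff_exists_clusterPt (hS : IsClosed S) (hK : IsCompact K)
    (hKcl : IsClosed K) (hlK : K ∈ l) :
    (𝓝ˢ S ⊓ l).NeBot ↔ ∃ y ∈ S, ClusterPt y l := by
  constructor
  · contrapose!
    intro hnot
    have hcompact : IsCompact (S ∩ K) := hK.inter_left hS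
    have hinside : Disjoint (𝓝ˢ (S ∩ K)) l :=
      hcompact.disjoint_nhdsSet_left.2 fun y hy ↦
        disjoint_iff.2 (not_neBot.1 (hnot y hy.1))
    have houtside : Disjoint (𝓝ˢ Kᶜ) l := by
      rw [hKcl.isOpen_compl.nhdsSet_eq, disjoint_principal_left, compl_compl]
      exact hlK
    have hcover : S ⊆ S ∩ K ∪ Kᶜ := fun y hy ↦ by
      by_cases hyK : y ∈ K <;> simp [hy, hyK]
    have hdisj : Disjoint (𝓝ˢ S) l :=
      (nhdsSet_union (S ∩ K) Kᶜ ▸ hinside.sup_left houtside).mono_left (nhdsSet_mono hcover)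
    exact hdisj.eq_bot
  · rintro ⟨y, hyS, hy⟩
    exact hy.neBot.mono (inf_le_inf_right l (nhds_le_nhdsSet hyS))

end NhdsSetCluster

namespace IsIdeal

variable {I : Set (Set ℕ)}

/-- The filter dual to an ideal `I`, consisting of the complements of the members of `I`; it turns
`I`-positivity into `∃ᶠ` and `I`-cluster points into `MapClusterPt`. -/
def dualFilter (hI : IsIdeal I) : Filter ℕ :=
  comk (· ∈ I) (hI.2.2.1 ∅ finite_empty) (fun B hB A hAB ↦ hI.1 A B hAB hB)
    fun A hA B hB ↦ hI.2.1 A B hA hB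

theorem eventually_dualFilter_iff (hI : IsIdeal I) {p : ℕ → Prop} :
    (∀ᶠ n in hI.dualFilter, p n) ↔ {n | ¬p n} ∈ I :=
  Iff.rfl

theorem frequently_dualFilter_iff (hI : IsIdeal I) {p : ℕ → Prop} :
    (∃ᶠ n in hI.dualFilter, p n) ↔ {n | p n} ∉ I := by
  simp only [Filter.Frequently, eventually_dualFilter_iff, not_not]

variable {X : Type*} [TopologicalSpace X] {x : ℕ → X}

theorem mem_roughCluster_iff_neBot (hI : IsIdeal I) {F : X → Set X} {η : X} :
    η ∈ RoughCluster I F x ↔ (𝓝ˢ (F η) ⊓ map x hI.dualFilter).NeBot := by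
  simp only [RoughCluster, mem_ofPred_eq, neBot_nhdsSet_inf_iff_forall_isOpen_frequently,
    frequently_map, hI.frequently_dualFilter_iff]

theorem mem_iClusterPts_iff_mapClusterPt (hI : IsIdeal I) {η : X} :
    η ∈ IClusterPts I x ↔ MapClusterPt η hI.dualFilter x := by
  rw [IClusterPts, hI.mem_roughCluster_iff_neBot, nhdsSet_singleton]
  rfl

end IsIdeal

theorem stmt4_general {X : Type*} [TopologicalSpace X] [R1Space X]
    {I : Set (Set ℕ)} (hI : IsIdeal I) {F : X → Set X} (hFcl : ∀ η : X, IsClosed (F η))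
    {x : ℕ → X} {K : Set X} (hK : IsCompact K) (hxK : {n : ℕ | x n ∉ K} ∈ I) :
    RoughCluster I F x = {η : X | (F η ∩ IClusterPts I x).Nonempty} := by
  ext η
  have hclosure : closure K ∈ map x hI.dualFilter :=
    mem_of_superset (hI.eventually_dualFilter_iff.2 hxK) fun _ hn ↦ subset_closure hn
  calc η ∈ RoughCluster I F x
    _ ↔ (𝓝ˢ (F η) ⊓ map x hI.dualFilter).NeBot := hI.mem_roughCluster_iff_neBot
    _ ↔ ∃ y ∈ F η, MapClusterPt y hI.dualFilter x :=
      neBot_nhdsSet_inf_iff_exists_clusterPt (hFcl η) hK.closure isClosed_closure hclosure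
    _ ↔ (F η ∩ IClusterPts I x).Nonempty :=
      exists_congr fun _ ↦ and_congr_right fun _ ↦ hI.mem_iClusterPts_iff_mapClusterPt.symm

theorem stmt4 {X : Type*} [TopologicalSpace X] [RegularSpace X]
    (I : Set (Set ℕ)) (hI : IsIdeal I)
    (F : X → Set X) (hF : IsRoughFamily F) (hFcl : ∀ η : X, IsClosed (F η))
    (x : ℕ → X)
    (K : Set X) (hK : IsCompact K) (hxK : {n : ℕ | x n ∉ K} ∈ I) :
    RoughCluster I F x = {η : X | (F η ∩ IClusterPts I x).Nonempty} :=
  stmt4_general hI hFcl hK hxK
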